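/- Path coupling contraction: let p* ∈ [0,1] solve φ(p)=p with 0 < φ'(p*) < 1. Then there exist ε, δ > 0 and N such that for all n ≥ N the following holds. Suppose X⁺ ≥ X⁻ are graphs on [n] differing at exactly one edge e, and for both X⁺ and X⁻, for all graphs G on at most L vertices with at least 2 edges and all edges e' of K_n, |r_G(·, e') − p*| < ε. Then there exists a coupling ν (a probability measure on pairs of graphs whose two marginals are the one-step Glauber distributions started from X⁺ and from X⁻ respectively) under which the expected Hamming distance satisfies E_ν[d_H(X⁺(1), X⁻(1))] ≤ 1 − δ/n². -/

import Mathlib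

open Finset

open scoped Classical

noncomputable section

/-- The set of edges of the complete graph `K_n` on vertex set `[n] = Fin n`:
unordered pairs of distinct vertices. -/
abbrev EdgeK (n : ℕ) : Type := {e : Sym2 (Fin n) // ¬ e.IsDiag}

/-- A graph on `[n]`, identified with an element `X ∈ {0,1}^{E(K_n)}`. -/
abbrev Config (n : ℕ) : Type := EdgeK n → Bool

/-- The image of an edge under an injection of vertex sets. -/
def mapEdge {m n : ℕ} (v : Fin m ↪ Fin n) (a : EdgeK m) : EdgeK n :=
  ⟨a.1.map v, fun h => a.2 ((Sym2.isDiag_map v.injective).mp h)⟩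

/-- The complete graph `K_n` as a configuration. -/
def fullConfig (n : ℕ) : Config n := fun _ => true

/-- `X ∪ {e}`. -/
def addEdge {n : ℕ} (X : Config n) (e : EdgeK n) : Config n :=
  fun f => if f = e then true else X f

/-- `X_{e+}` (for `b = true`), resp. `X_{e-}` (for `b = false`). -/
def setEdge {n : ℕ} (X : Config n) (e : EdgeK n) (b : Bool) : Config n :=
  fun f => if f = e then b else X f

/-- `N_G(X)`: the number of tuples of `m` distinct vertices of `[n]` such that every
edge of the pattern graph `G` (a graph on `m` labelled vertices) is mapped to an edge of `X`. -/
def copyCount {n m : ℕ} (X : Config n) (G : Finset (EdgeK m)) : ℕ :=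
  (univ.filter fun v : Fin m ↪ Fin n => ∀ a ∈ G, X (mapEdge v a) = true).card

/-- `N_G(X, e)`: the number of such tuples for `X ∪ {e}` which moreover use the edge `e`. -/
def rootedCount {n m : ℕ} (X : Config n) (G : Finset (EdgeK m)) (e : EdgeK n) : ℕ :=
  (univ.filter fun v : Fin m ↪ Fin n =>
    (∃ a ∈ G, mapEdge v a = e) ∧ ∀ a ∈ G, addEdge X e (mapEdge v a) = true).card

/-- `N_G(X, e, e')`: the number of such tuples for `X ∪ {e, e'}` which use both `e` and `e'`. -/
def rooted2Count {n m : ℕ} (X : Config n) (G : Finset (EdgeK m)) (e e' : EdgeK n) : ℕ :=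
  (univ.filter fun v : Fin m ↪ Fin n =>
    (∃ a ∈ G, mapEdge v a = e) ∧ (∃ a ∈ G, mapEdge v a = e') ∧
      ∀ a ∈ G, addEdge (addEdge X e) e' (mapEdge v a) = true).card

/-- The number of edges of the graph `X`. -/
def edgeCount {n : ℕ} (X : Config n) : ℕ := (univ.filter fun e => X e = true).card

/-- Hamming distance between two graphs: the number of edges of disagreement. -/
def hamDist {n : ℕ} (X Y : Config n) : ℕ := (univ.filter fun f => X f ≠ Y f).card

/-- The Hamiltonian `H(X) = ∑ i, β i * N_{G_i}(X) / n^(|V_i| - 2)`. -/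
def ergmH {s : ℕ} (V : Fin s → ℕ) (Pt : ∀ i, Finset (EdgeK (V i))) (β : Fin s → ℝ)
    (n : ℕ) (X : Config n) : ℝ :=
  ∑ i, β i * (copyCount X (Pt i) : ℝ) / (n : ℝ) ^ (V i - 2)

/-- The Gibbs measure `p_n(X) = exp(H(X)) / Z_n`. -/
def gibbs {s : ℕ} (V : Fin s → ℕ) (Pt : ∀ i, Finset (EdgeK (V i))) (β : Fin s → ℝ)
    (n : ℕ) (X : Config n) : ℝ :=
  Real.exp (ergmH V Pt β n X) / ∑ Y : Config n, Real.exp (ergmH V Pt β n Y)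

/-- `∂_e H(X) = H(X_{e+}) - H(X_{e-})`. -/
def dH {s : ℕ} (V : Fin s → ℕ) (Pt : ∀ i, Finset (EdgeK (V i))) (β : Fin s → ℝ)
    (n : ℕ) (X : Config n) (e : EdgeK n) : ℝ :=
  ergmH V Pt β n (setEdge X e true) - ergmH V Pt β n (setEdge X e false)

/-- The transition kernel of the Glauber dynamics: a uniformly random edge `e` of `K_n` is
chosen and set present with probability `exp(∂_e H(X)) /(1 + exp(∂_e H(X)))`, absent
otherwise. -/
def glauber {s : ℕ} (V : Fin s → ℕ) (Pt : ∀ i, Finset (EdgeK (V i))) (β : Fin s → ℝ)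
    (n : ℕ) (X Y : Config n) : ℝ :=
  ((n.choose 2 : ℝ))⁻¹ * ∑ e : EdgeK n,
    ((if Y = setEdge X e true then
        Real.exp (dH V Pt β n X e) / (1 + Real.exp (dH V Pt β n X e)) else 0)
      + (if Y = setEdge X e false then 1 / (1 + Real.exp (dH V Pt β n X e)) else 0))

/-- The `t`-step distribution of the Markov chain with one-step kernel `K`,
started from a given state. -/
def kernelStep {n : ℕ} (K : Config n → Config n → ℝ) : ℕ → Config n → Config n → ℝ
  | 0 => fun x y => if y = x then 1 else 0
  | (t+1) => fun x y => ∑ z, kernelStep K t x z * K z y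

/-- Total variation distance between two (signed) distributions on `Config n`. -/
def tvDist {n : ℕ} (μ ν : Config n → ℝ) : ℝ := (∑ Y, |μ Y - ν Y|) / 2

/-- `mixes K π t` says that after `t` steps the chain with kernel `K` is within total
variation distance `e⁻¹` of `π` from every starting state. -/
def mixes {n : ℕ} (K : Config n → Config n → ℝ) (π : Config n → ℝ) (t : ℕ) : Prop :=
  ∀ x, tvDist (kernelStep K t x) π ≤ Real.exp (-1)

/-- The mixing time: the least `t` such that from every starting state the chain is within
total variation distance `e⁻¹` of `π`. -/
def mixingTime {n : ℕ} (K : Config n → Config n → ℝ) (π : Config n → ℝ) : ℕ :=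
  sInf {t | mixes K π t}

/-- `Ψ(p) = ∑ i, 2 β_i |E_i| p^(|E_i| - 1)`. -/
def PsiF {s : ℕ} {V : Fin s → ℕ} (Pt : ∀ i, Finset (EdgeK (V i))) (β : Fin s → ℝ)
    (p : ℝ) : ℝ :=
  ∑ i, 2 * β i * ((Pt i).card : ℝ) * p ^ ((Pt i).card - 1)

/-- `φ(p) = exp(Ψ(p)) / (1 + exp(Ψ(p)))`. -/
def phiF {s : ℕ} {V : Fin s → ℕ} (Pt : ∀ i, Finset (EdgeK (V i))) (β : Fin s → ℝ)
    (p : ℝ) : ℝ :=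
  Real.exp (PsiF Pt β p) / (1 + Real.exp (PsiF Pt β p))

/-- High temperature phase: `φ(p) = p` has a unique solution `p*` (in `[0,1]`), which
moreover satisfies `φ'(p*) < 1`. -/
def HighTemp {s : ℕ} {V : Fin s → ℕ} (Pt : ∀ i, Finset (EdgeK (V i))) (β : Fin s → ℝ)
    (pstar : ℝ) : Prop :=
  pstar ∈ Set.Icc (0:ℝ) 1 ∧ phiF Pt β pstar = pstar ∧
    (∀ q ∈ Set.Icc (0:ℝ) 1, phiF Pt β q = q → q = pstar) ∧
    deriv (phiF Pt β) pstar < 1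

/-- Low temperature phase: `φ(p) = p` has at least two solutions `p` with `φ'(p) < 1`. -/
def LowTemp {s : ℕ} {V : Fin s → ℕ} (Pt : ∀ i, Finset (EdgeK (V i))) (β : Fin s → ℝ) : Prop :=
  ∃ p₁ p₂ : ℝ, p₁ ∈ Set.Icc (0:ℝ) 1 ∧ p₂ ∈ Set.Icc (0:ℝ) 1 ∧ p₁ ≠ p₂ ∧
    phiF Pt β p₁ = p₁ ∧ phiF Pt β p₂ = p₂ ∧
    deriv (phiF Pt β) p₁ < 1 ∧ deriv (phiF Pt β) p₂ < 1

/-- `r_G(X, e) = (N_G(X,e) / (2 |E(G)| n^(|V(G)|-2)))^(1/(|E(G)|-1))`. -/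
def rG {n m : ℕ} (X : Config n) (G : Finset (EdgeK m)) (e : EdgeK n) : ℝ :=
  ((rootedCount X G e : ℝ) / (2 * (G.card : ℝ) * (n : ℝ) ^ (m - 2))) ^ (((G.card : ℝ) - 1)⁻¹)

/-- The set of values `r_G(X,e)` over all edges `e` of `K_n` and all graphs `G` on at
most `L` vertices with at least two edges. -/
def rSet (L n : ℕ) (X : Config n) : Set ℝ :=
  {r | ∃ m, m ≤ L ∧ ∃ G : Finset (EdgeK m), 2 ≤ G.card ∧ ∃ e : EdgeK n, r = rG X G e}

/-- `r̄(X)`: the maximum of `r_G(X,e)` over all edges `e` of `K_n` and all graphs `G` on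
at most `L` vertices with at least two edges. -/
def rbar (L n : ℕ) (X : Config n) : ℝ := sSup (rSet L n X)

/-- `r_min(X)`: the corresponding minimum. -/
def rmin (L n : ℕ) (X : Config n) : ℝ := sInf (rSet L n X)

/-- The cycle `C_l` on `l` labelled vertices, as a pattern graph. -/
def cyclePattern (l : ℕ) [NeZero l] : Finset (EdgeK l) :=
  univ.filter fun e => ∃ i : Fin l, e.1 = s(i, i + 1)

/-- The probability of a length-`T` trajectory `w` for the chain with kernel `K`
started at `x`. -/
def trajProb {n T : ℕ} (K : Config n → Config n → ℝ) (x : Config n)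
    (w : Fin (T+1) → Config n) : ℝ :=
  (if w 0 = x then 1 else 0) * ∏ i : Fin T, K (w i.castSucc) (w i.succ)

/-- Two edges of `K_n` share a vertex. -/
def sharesVertex {n : ℕ} (e e' : EdgeK n) : Prop := ∃ v, v ∈ e.1 ∧ v ∈ e'.1

end

/-!
Couple the two steps by updating the same edge `f` in both graphs with the same uniform variable.
For `f = e` the disagreement disappears; for `f ≠ e` a second one appears with probability
`σ(∂_f H(X⁺)) - σ(∂_f H(X⁻))`, where `σ` is the sigmoid. Hence the expected distance is at most
`1 - (1 - S) / (n choose 2)`, where `S` is the sum of these probabilities over `f ≠ e`.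

As `n → ∞` and the `r_G` approach `p`, every `∂_f H` approaches `Ψ(p)`, so `S` is at most
`K ∑_f (∂_f H(X⁺) - ∂_f H(X⁻))` for any `K > σ'(Ψ(p))`. A copy of `G_i` through `f` that is present
in `X⁺` but not in `X⁻` also uses `e`; erasing from `G_i` the edge `a` sent to `f` leaves a copy of
`G_i - a` through `e`, which in turn determines `f`. So the last sum is at most
`∑ i, β_i ∑_a N_{G_i - a}(X⁺, e) / n^(|V_i| - 2)`, which tends to `Ψ'(p)`. In the limit `S` is
therefore bounded by `σ'(Ψ(p)) Ψ'(p) = φ'(p) < 1`.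
-/

open Filter Topology

section Edges

variable {m n k : ℕ}

lemma mapEdge_injective (v : Fin m ↪ Fin n) : Function.Injective (mapEdge v) := fun _ _ h =>
  Subtype.ext (Sym2.map.injective v.injective (congrArg Subtype.val h))

lemma mapEdge_trans (u : Fin m ↪ Fin n) (v : Fin n ↪ Fin k) (a : EdgeK m) :
    mapEdge (u.trans v) a = mapEdge v (mapEdge u a) :=
  Subtype.ext (by simp [mapEdge, Sym2.map_map])

lemma card_edgeK (n : ℕ) : Fintype.card (EdgeK n) = n.choose 2 := by
  convert! Sym2.card_subtype_not_diag (α := Fin n)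
  rw [Fintype.card_fin]

lemma choose_two_pos_of_edgeK (e : EdgeK n) : 0 < n.choose 2 :=
  card_edgeK n ▸ Fintype.card_pos_iff.2 ⟨e⟩

lemma two_le_of_edgeK (e : EdgeK n) : 2 ≤ n :=
  not_lt.1 fun h => (choose_two_pos_of_edgeK e).ne' (Nat.choose_eq_zero_of_lt h)

lemma exists_perm_mapEdge_eq (e f : EdgeK n) :
    ∃ σ : Equiv.Perm (Fin n), mapEdge σ.toEmbedding e = f := by
  obtain ⟨⟨x, y⟩, hxy⟩ := e
  obtain ⟨⟨z, w⟩, hzw⟩ := f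
  obtain ⟨σ, hx, hy⟩ := MulAction.is_two_pretransitive_iff.1
    (Equiv.Perm.isMultiplyPretransitive (Fin n) 2) hxy hzw
  exact ⟨σ, Subtype.ext (congr_arg₂ (fun i j => s(i, j)) hx hy)⟩

lemma card_mapEdge_eq_le (a : EdgeK m) (e f : EdgeK n) :
    #{v : Fin m ↪ Fin n | mapEdge v a = e} ≤ #{v : Fin m ↪ Fin n | mapEdge v a = f} := by
  obtain ⟨σ, rfl⟩ := exists_perm_mapEdge_eq e f
  refine card_le_card_of_injOn (fun v => v.trans σ.toEmbedding) ?_ ?_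
  · intro v hv
    simp_all [mapEdge_trans]
  · intro v _ w _ h
    exact DFunLike.ext _ _ fun x => by simpa using DFunLike.congr_fun h x

lemma choose_two_mul_card_mapEdge_eq (a : EdgeK m) (e : EdgeK n) :
    n.choose 2 * #{v : Fin m ↪ Fin n | mapEdge v a = e} = n.descFactorial m :=
  calc n.choose 2 * #{v : Fin m ↪ Fin n | mapEdge v a = e}
    _ = ∑ _f : EdgeK n, #{v : Fin m ↪ Fin n | mapEdge v a = e} := by
      rw [sum_const, card_univ, card_edgeK, smul_eq_mul]
    _ = ∑ f, #{v : Fin m ↪ Fin n | mapEdge v a = f} :=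
      sum_congr rfl fun f _ => (card_mapEdge_eq_le a e f).antisymm (card_mapEdge_eq_le a f e)
    _ = Fintype.card (Fin m ↪ Fin n) :=
      (card_eq_sum_card_fiberwise fun _ _ => mem_coe.2 (mem_univ _)).symm
    _ = n.descFactorial m := by simp [Fintype.card_embedding_eq]

end Edges

section RootedCounts

variable {m n : ℕ} {X Y : Config n} {e f : EdgeK n}

lemma copyCount_setEdge_true (X : Config n) (G : Finset (EdgeK m)) (f : EdgeK n) :
    copyCount (setEdge X f true) G = copyCount (setEdge X f false) G + rootedCount X G f := by
  unfold copyCount rootedCount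
  rw [← card_union_of_disjoint]
  · congr 1
    ext v
    simp only [mem_filter, mem_univ, true_and, mem_union]
    grind [setEdge, addEdge]
  · refine disjoint_filter.2 fun v _ hfalse ⟨⟨a, ha, hav⟩, _⟩ => ?_
    simpa [setEdge, hav] using hfalse a ha

lemma rootedCount_mono (h : ∀ f, X f = true → Y f = true) (G : Finset (EdgeK m)) (f : EdgeK n) :
    rootedCount X G f ≤ rootedCount Y G f := by
  refine card_le_card (monotone_filter_right _ fun v _ hv => ⟨hv.1, fun a ha => ?_⟩)
  have := hv.2 a ha
  grind [addEdge]

lemma rootedCount_empty (X : Config n) (f : EdgeK n) :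
    rootedCount X (∅ : Finset (EdgeK m)) f = 0 := by
  simp [rootedCount]

lemma rootedCount_singleton (X : Config n) (a : EdgeK m) (f : EdgeK n) :
    rootedCount X {a} f = #{v : Fin m ↪ Fin n | mapEdge v a = f} := by
  unfold rootedCount
  congr 1
  ext v
  simp +contextual [addEdge]

lemma rootedCount_eq_of_card_le_one {G : Finset (EdgeK m)} (hG : #G ≤ 1) (X Y : Config n)
    (f : EdgeK n) : rootedCount X G f = rootedCount Y G f := by
  obtain rfl | hne := G.eq_empty_or_nonempty
  · simp only [rootedCount_empty]
  · obtain ⟨a, rfl⟩ := card_eq_one.1 (hG.antisymm hne.card_pos)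
    simp only [rootedCount_singleton]

lemma rootedCount_le_add_rooted2Count (hoff : ∀ g, g ≠ e → X g = Y g) (G : Finset (EdgeK m)) :
    rootedCount X G f ≤ rootedCount Y G f + rooted2Count X G f e := by
  refine (card_le_card fun v hv => ?_).trans (card_union_le _ _)
  simp only [mem_filter, mem_univ, true_and, mem_union] at hv ⊢
  by_cases he : ∃ b ∈ G, mapEdge v b = e
  · exact Or.inr ⟨hv.1, he, fun b hb => by grind [addEdge]⟩
  · exact Or.inl ⟨hv.1, fun b hb => by grind [addEdge]⟩

lemma rooted2Count_le_sum (hfe : f ≠ e) (X : Config n) (G : Finset (EdgeK m)) :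
    rooted2Count X G f e ≤ ∑ a ∈ G, #{v ∈ {v : Fin m ↪ Fin n | (∃ b ∈ G.erase a, mapEdge v b = e) ∧
      ∀ b ∈ G.erase a, addEdge X e (mapEdge v b) = true} | mapEdge v a = f} := by
  refine (card_le_card fun v hv => ?_).trans card_biUnion_le
  simp only [mem_filter, mem_univ, true_and, mem_biUnion, mem_erase] at hv ⊢
  obtain ⟨⟨a, ha, rfl⟩, ⟨b, hb, rfl⟩, hX⟩ := hv
  refine ⟨a, ha, ⟨⟨b, ⟨fun h => hfe (h ▸ rfl), hb⟩, rfl⟩, fun c hc => ?_⟩, rfl⟩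
  have := (mapEdge_injective v).ne hc.1
  grind [addEdge]

lemma sum_rooted2Count_le (X : Config n) (G : Finset (EdgeK m)) (e : EdgeK n) :
    ∑ f ∈ univ.erase e, rooted2Count X G f e ≤ ∑ a ∈ G, rootedCount X (G.erase a) e := by
  refine (sum_le_sum fun f hf => rooted2Count_le_sum (ne_of_mem_erase hf) X G).trans ?_
  rw [sum_comm]
  refine sum_le_sum fun a _ => ?_
  rw [sum_card_fiberwise_eq_card_filter]
  exact card_filter_le _ _

lemma sum_rootedCount_le (hoff : ∀ f, f ≠ e → X f = Y f) (G : Finset (EdgeK m)) :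
    ∑ f ∈ univ.erase e, rootedCount X G f ≤
      ∑ f ∈ univ.erase e, rootedCount Y G f + ∑ a ∈ G, rootedCount X (G.erase a) e :=
  calc ∑ f ∈ univ.erase e, rootedCount X G f
    _ ≤ ∑ f ∈ univ.erase e, (rootedCount Y G f + rooted2Count X G f e) :=
      sum_le_sum fun _ _ => rootedCount_le_add_rooted2Count hoff G
    _ = ∑ f ∈ univ.erase e, rootedCount Y G f + ∑ f ∈ univ.erase e, rooted2Count X G f e :=
      sum_add_distrib
    _ ≤ _ := by gcongr; exact sum_rooted2Count_le X G e

end RootedCounts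

section DiscreteDerivative

variable {s n : ℕ} {V : Fin s → ℕ} (Pt : ∀ i, Finset (EdgeK (V i))) (β : Fin s → ℝ)
  {X Y : Config n} {e : EdgeK n}

/-- `∑ i, β_i ∑ a ∈ E_i, N_{G_i - a}(X, e) / n^(|V_i| - 2)`, which bounds the total effect of
the edge `e` on the discrete derivatives `∂_f H` at the other edges `f`. -/
noncomputable def edgeInfluence (X : Config n) (e : EdgeK n) : ℝ :=
  ∑ i, β i * ∑ a ∈ Pt i, (rootedCount X ((Pt i).erase a) e : ℝ) / (n : ℝ) ^ (V i - 2)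

lemma dH_eq_sum_rootedCount (X : Config n) (f : EdgeK n) :
    dH V Pt β n X f = ∑ i, β i * ((rootedCount X (Pt i) f : ℝ) / (n : ℝ) ^ (V i - 2)) := by
  unfold dH ergmH
  rw [← sum_sub_distrib]
  refine sum_congr rfl fun i _ => ?_
  rw [copyCount_setEdge_true, Nat.cast_add]
  ring

variable {Pt β}

lemma dH_mono (hβ : ∀ i, 2 ≤ #(Pt i) → 0 ≤ β i) (hle : ∀ f, X f = true → Y f = true)
    (f : EdgeK n) : dH V Pt β n X f ≤ dH V Pt β n Y f := by
  simp only [dH_eq_sum_rootedCount]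
  refine sum_le_sum fun i _ => ?_
  rcases le_or_gt 2 #(Pt i) with h2 | h1
  · have := hβ i h2
    have := rootedCount_mono hle (Pt i) f
    gcongr
  · rw [rootedCount_eq_of_card_le_one (Nat.le_of_lt_succ h1) X Y]

lemma sum_mul_rootedCount_sub_le {m : ℕ} {G : Finset (EdgeK m)} {b : ℝ} (hb : 2 ≤ #G → 0 ≤ b)
    (hoff : ∀ f, f ≠ e → X f = Y f) :
    ∑ f ∈ univ.erase e, b * ((rootedCount X G f : ℝ) - rootedCount Y G f) ≤
      b * ∑ a ∈ G, (rootedCount X (G.erase a) e : ℝ) := by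
  rcases le_or_gt 2 #G with h2 | h1
  · rw [← mul_sum, sum_sub_distrib]
    refine mul_le_mul_of_nonneg_left ?_ (hb h2)
    rw [sub_le_iff_le_add']
    exact_mod_cast sum_rootedCount_le hoff G
  · have hdiff (f : EdgeK n) : rootedCount X G f = rootedCount Y G f :=
      rootedCount_eq_of_card_le_one (Nat.le_of_lt_succ h1) X Y f
    have herase : ∀ a ∈ G, rootedCount X (G.erase a) e = 0 := fun a ha => by
      have : G.erase a = ∅ := card_eq_zero.1 (by rw [card_erase_of_mem ha]; lia)
      rw [this, rootedCount_empty]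
    rw [← Nat.cast_sum, sum_eq_zero herase]
    simp [hdiff]

lemma sum_dH_sub_le_edgeInfluence (hβ : ∀ i, 2 ≤ #(Pt i) → 0 ≤ β i)
    (hoff : ∀ f, f ≠ e → X f = Y f) :
    ∑ f ∈ univ.erase e, (dH V Pt β n X f - dH V Pt β n Y f) ≤ edgeInfluence Pt β X e := by
  simp only [dH_eq_sum_rootedCount, ← sum_sub_distrib]
  rw [sum_comm]
  refine sum_le_sum fun i _ => ?_
  simp only [← mul_sub, ← sub_div, ← mul_div_assoc, ← sum_div]
  gcongr
  exact sum_mul_rootedCount_sub_le (hβ i) hoff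

end DiscreteDerivative

section Coupling

variable {α β ι : Type*} [Fintype α] [Fintype β]

/-- `ν` is a coupling of the mass functions `μ₁` and `μ₂` on finite types. -/
structure IsCoupling (ν : α × β → ℝ) (μ₁ : α → ℝ) (μ₂ : β → ℝ) : Prop where
  nonneg : ∀ z, 0 ≤ ν z
  sum_snd : ∀ a, ∑ b, ν (a, b) = μ₁ a
  sum_fst : ∀ b, ∑ a, ν (a, b) = μ₂ b

lemma IsCoupling.sum_eq {ν : α × β → ℝ} {μ₁ : α → ℝ} {μ₂ : β → ℝ} (h : IsCoupling ν μ₁ μ₂) :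
    ∑ z, ν z = ∑ a, μ₁ a := by
  simp only [Fintype.sum_prod_type, h.sum_snd]

lemma IsCoupling.sum_smul {t : Finset ι} {w : ι → ℝ} {ν : ι → α × β → ℝ} {μ₁ : ι → α → ℝ}
    {μ₂ : ι → β → ℝ} (hw : ∀ i ∈ t, 0 ≤ w i) (h : ∀ i ∈ t, IsCoupling (ν i) (μ₁ i) (μ₂ i)) :
    IsCoupling (∑ i ∈ t, w i • ν i) (∑ i ∈ t, w i • μ₁ i) (∑ i ∈ t, w i • μ₂ i) where
  nonneg z := by
    simp only [Finset.sum_apply, Pi.smul_apply, smul_eq_mul]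
    exact sum_nonneg fun i hi => mul_nonneg (hw i hi) ((h i hi).nonneg z)
  sum_snd a := by
    simp only [Finset.sum_apply, Pi.smul_apply, smul_eq_mul]
    rw [sum_comm]
    exact sum_congr rfl fun i hi => by rw [← mul_sum, (h i hi).sum_snd]
  sum_fst b := by
    simp only [Finset.sum_apply, Pi.smul_apply, smul_eq_mul]
    rw [sum_comm]
    exact sum_congr rfl fun i hi => by rw [← mul_sum, (h i hi).sum_fst]

variable [DecidableEq α] [DecidableEq β]

/-- The law of a point which is `a` with probability `q` and `b` with probability `1 - q`. -/
noncomputable def twoPointMass (q : ℝ) (a b : α) : α → ℝ :=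
  Pi.single a q + Pi.single b (1 - q)

lemma sum_twoPointMass (q : ℝ) (a b : α) : ∑ x, twoPointMass q a b x = 1 := by
  simp [twoPointMass, sum_add_distrib]

/-- The joint law of two two-point variables driven by the same uniform variable, when the first
one has the larger probability `q₁ ≥ q₂` of taking its first value. -/
noncomputable def monotoneCoupling (q₁ q₂ : ℝ) (a₁ b₁ : α) (a₂ b₂ : β) : α × β → ℝ :=
  Pi.single (a₁, a₂) q₂ + Pi.single (a₁, b₂) (q₁ - q₂) + Pi.single (b₁, b₂) (1 - q₁)

lemma isCoupling_monotoneCoupling {q₁ q₂ : ℝ} (h₀ : 0 ≤ q₂) (h : q₂ ≤ q₁) (h₁ : q₁ ≤ 1)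
    (a₁ b₁ : α) (a₂ b₂ : β) :
    IsCoupling (monotoneCoupling q₁ q₂ a₁ b₁ a₂ b₂) (twoPointMass q₁ a₁ b₁)
      (twoPointMass q₂ a₂ b₂) where
  nonneg := by
    have hsingle (z : α × β) {c : ℝ} (hc : 0 ≤ c) : 0 ≤ (Pi.single z c : α × β → ℝ) :=
      Pi.single_nonneg.2 hc
    exact add_nonneg (add_nonneg (hsingle _ h₀) (hsingle _ (sub_nonneg.2 h)))
      (hsingle _ (sub_nonneg.2 h₁))
  sum_snd x := by
    simp only [monotoneCoupling, twoPointMass, Pi.add_apply, Pi.single_apply, Prod.mk.injEq,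
      ite_and, sum_add_distrib, sum_ite_irrel, sum_ite_eq', mem_univ, ↓reduceIte, sum_const_zero]
    grind
  sum_fst y := by
    simp only [monotoneCoupling, twoPointMass, Pi.add_apply, Pi.single_apply, Prod.mk.injEq,
      and_comm (b := y = _), ite_and, sum_add_distrib, sum_ite_irrel, sum_ite_eq',
      mem_univ, ↓reduceIte, sum_const_zero]
    grind

lemma sum_monotoneCoupling_mul (q₁ q₂ : ℝ) (a₁ b₁ : α) (a₂ b₂ : β) (c : α × β → ℝ) :
    ∑ z, monotoneCoupling q₁ q₂ a₁ b₁ a₂ b₂ z * c z =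
      q₂ * c (a₁, a₂) + (q₁ - q₂) * c (a₁, b₂) + (1 - q₁) * c (b₁, b₂) := by
  simp [monotoneCoupling, add_mul, sum_add_distrib, Pi.single_apply]

end Coupling

section HammingDistance

variable {n : ℕ} {X Y : Config n} {e : EdgeK n}

lemma hamDist_self (X : Config n) : hamDist X X = 0 := by
  simp [hamDist]

lemma setEdge_congr (hoff : ∀ f, f ≠ e → X f = Y f) (b : Bool) :
    setEdge X e b = setEdge Y e b := by
  funext g
  grind [setEdge]

lemma hamDist_setEdge_le_one (hoff : ∀ f, f ≠ e → X f = Y f) (f : EdgeK n) (b : Bool) :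
    hamDist (setEdge X f b) (setEdge Y f b) ≤ 1 := by
  rw [← card_singleton e]
  refine card_le_card fun g hg => ?_
  simp only [mem_filter, mem_univ, true_and, mem_singleton] at hg ⊢
  grind [setEdge]

lemma hamDist_setEdge_le_two (hoff : ∀ f, f ≠ e → X f = Y f) (f : EdgeK n) (b c : Bool) :
    hamDist (setEdge X f b) (setEdge Y f c) ≤ 2 := by
  refine (card_le_card (t := {e, f}) fun g hg => ?_).trans card_le_two
  simp only [mem_filter, mem_univ, true_and, mem_insert, mem_singleton] at hg ⊢
  grind [setEdge]

end HammingDistance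

lemma exp_div_one_add_exp (x : ℝ) : Real.exp x / (1 + Real.exp x) = Real.sigmoid x := by
  rw [Real.sigmoid_def, Real.exp_neg]
  field_simp
  ring

section GlauberCoupling

variable {s n : ℕ} {V : Fin s → ℕ} (Pt : ∀ i, Finset (EdgeK (V i))) (β : Fin s → ℝ)
  {X Y : Config n} {e : EdgeK n}

/-- The law of the graph `X` after resampling its edge `f`. -/
noncomputable def edgeUpdate (X : Config n) (f : EdgeK n) : Config n → ℝ :=
  twoPointMass (Real.sigmoid (dH V Pt β n X f)) (setEdge X f true) (setEdge X f false)

/-- The joint law of `X` and `Y` after resampling the edge `f` in both with the same uniform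
variable, when `∂_f H(Y) ≤ ∂_f H(X)`. -/
noncomputable def edgeUpdateCoupling (X Y : Config n) (f : EdgeK n) : Config n × Config n → ℝ :=
  monotoneCoupling (Real.sigmoid (dH V Pt β n X f)) (Real.sigmoid (dH V Pt β n Y f))
    (setEdge X f true) (setEdge X f false) (setEdge Y f true) (setEdge Y f false)

lemma glauber_eq_sum_edgeUpdate (X : Config n) :
    glauber V Pt β n X = ∑ f, ((n.choose 2 : ℝ))⁻¹ • edgeUpdate Pt β X f := by
  have one_div_eq (x : ℝ) : 1 / (1 + Real.exp x) = 1 - Real.sigmoid x := by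
    rw [← exp_div_one_add_exp]
    field_simp
    ring
  funext Z
  simp only [glauber, edgeUpdate, twoPointMass, exp_div_one_add_exp, one_div_eq, Finset.sum_apply,
    Pi.smul_apply, Pi.add_apply, Pi.single_apply, smul_eq_mul, mul_sum]

lemma sum_glauber (hn : 2 ≤ n) (X : Config n) : ∑ Z, glauber V Pt β n X Z = 1 := by
  have : (n.choose 2 : ℝ) ≠ 0 := by exact_mod_cast (Nat.choose_pos hn).ne'
  simp only [glauber_eq_sum_edgeUpdate, edgeUpdate, Finset.sum_apply, Pi.smul_apply, smul_eq_mul]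
  rw [sum_comm]
  simp only [← mul_sum, sum_twoPointMass, sum_const, card_univ, card_edgeK, nsmul_eq_mul, mul_one]
  exact mul_inv_cancel₀ this

lemma isCoupling_edgeUpdateCoupling {f : EdgeK n} (h : dH V Pt β n Y f ≤ dH V Pt β n X f) :
    IsCoupling (edgeUpdateCoupling Pt β X Y f) (edgeUpdate Pt β X f) (edgeUpdate Pt β Y f) :=
  isCoupling_monotoneCoupling (Real.sigmoid_nonneg _) (Real.sigmoid_le h) (Real.sigmoid_le_one _)
    _ _ _ _

lemma sum_edgeUpdateCoupling_self_mul_hamDist (hoff : ∀ f, f ≠ e → X f = Y f) :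
    ∑ z, edgeUpdateCoupling Pt β X Y e z * (hamDist z.1 z.2 : ℝ) = 0 := by
  have hdH : dH V Pt β n X e = dH V Pt β n Y e := by simp only [dH, setEdge_congr hoff]
  rw [edgeUpdateCoupling, sum_monotoneCoupling_mul, hdH]
  simp [setEdge_congr hoff, hamDist_self]

lemma sum_edgeUpdateCoupling_mul_hamDist_le (hoff : ∀ f, f ≠ e → X f = Y f) {f : EdgeK n}
    (h : dH V Pt β n Y f ≤ dH V Pt β n X f) :
    ∑ z, edgeUpdateCoupling Pt β X Y f z * (hamDist z.1 z.2 : ℝ) ≤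
      1 + (Real.sigmoid (dH V Pt β n X f) - Real.sigmoid (dH V Pt β n Y f)) := by
  have hsame (b : Bool) : (hamDist (setEdge X f b) (setEdge Y f b) : ℝ) ≤ 1 := by
    exact_mod_cast hamDist_setEdge_le_one hoff f b
  have hdiff : (hamDist (setEdge X f true) (setEdge Y f false) : ℝ) ≤ 2 := by
    exact_mod_cast hamDist_setEdge_le_two hoff f true false
  have h₂ := Real.sigmoid_nonneg (dH V Pt β n Y f)
  have h₁ := Real.sigmoid_le_one (dH V Pt β n X f)
  have h₁₂ := Real.sigmoid_le h
  rw [edgeUpdateCoupling, sum_monotoneCoupling_mul]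
  linarith [mul_le_mul_of_nonneg_left (hsame true) h₂,
    mul_le_mul_of_nonneg_left hdiff (sub_nonneg.2 h₁₂),
    mul_le_mul_of_nonneg_left (hsame false) (sub_nonneg.2 h₁)]

lemma sum_sum_edgeUpdateCoupling_mul_hamDist_le (hoff : ∀ f, f ≠ e → X f = Y f)
    (hdH : ∀ f, dH V Pt β n Y f ≤ dH V Pt β n X f) :
    ∑ f, ∑ z, edgeUpdateCoupling Pt β X Y f z * (hamDist z.1 z.2 : ℝ) ≤
      n.choose 2 - 1 + ∑ f ∈ univ.erase e,
        (Real.sigmoid (dH V Pt β n X f) - Real.sigmoid (dH V Pt β n Y f)) := by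
  have hcard : (#(univ.erase e) : ℝ) = n.choose 2 - 1 := by
    rw [cast_card_erase_of_mem (mem_univ e), card_univ, card_edgeK]
  rw [← add_sum_erase _ _ (mem_univ e), sum_edgeUpdateCoupling_self_mul_hamDist Pt β hoff, zero_add,
    ← hcard, cast_card, ← sum_add_distrib]
  exact sum_le_sum fun f _ => sum_edgeUpdateCoupling_mul_hamDist_le Pt β hoff (hdH f)

theorem exists_isCoupling_glauber_sum_hamDist_le (hoff : ∀ f, f ≠ e → X f = Y f)
    (hdH : ∀ f, dH V Pt β n Y f ≤ dH V Pt β n X f) :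
    ∃ ν, IsCoupling ν (glauber V Pt β n X) (glauber V Pt β n Y) ∧
      ∑ z, ν z * (hamDist z.1 z.2 : ℝ) ≤ 1 - (1 - ∑ f ∈ univ.erase e,
        (Real.sigmoid (dH V Pt β n X f) - Real.sigmoid (dH V Pt β n Y f))) / n.choose 2 := by
  have hpos : (0 : ℝ) < n.choose 2 := by exact_mod_cast choose_two_pos_of_edgeK e
  refine ⟨∑ f, (n.choose 2 : ℝ)⁻¹ • edgeUpdateCoupling Pt β X Y f, ?_, ?_⟩
  · simp only [glauber_eq_sum_edgeUpdate]
    exact .sum_smul (fun _ _ => by positivity)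
      fun f _ => isCoupling_edgeUpdateCoupling Pt β (hdH f)
  · simp only [Finset.sum_apply, Pi.smul_apply, smul_eq_mul, sum_mul, mul_assoc]
    rw [sum_comm]
    simp only [← mul_sum]
    rw [inv_mul_le_iff₀ hpos, mul_sub, mul_div_cancel₀ _ hpos.ne']
    linarith [sum_sum_edgeUpdateCoupling_mul_hamDist_le Pt β hoff hdH]

end GlauberCoupling

section Limit

variable {L m n s : ℕ} {p : ℝ} {V : Fin s → ℕ} (Pt : ∀ i, Finset (EdgeK (V i))) (β : Fin s → ℝ)

lemma tendsto_descFactorial_div_pow (k : ℕ) :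
    Tendsto (fun n : ℕ => (n.descFactorial k : ℝ) / (n : ℝ) ^ k) atTop (𝓝 1) := by
  refine (Asymptotics.isEquivalent_iff_tendsto_one ?_).1 (isEquivalent_descFactorial k)
  filter_upwards [eventually_gt_atTop 0] with n hn
  positivity

lemma rootedCount_div_pow_eq_rG_pow (hn : 0 < n) (X : Config n) {G : Finset (EdgeK m)} (hG : 2 ≤ #G)
    (e : EdgeK n) :
    (rootedCount X G e : ℝ) / (n : ℝ) ^ (m - 2) = 2 * (#G : ℝ) * rG X G e ^ (#G - 1) := by
  have hcast : (#G : ℝ) - 1 = (#G - 1 : ℕ) := by rw [Nat.cast_sub (by lia), Nat.cast_one]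
  have : #G ≠ 0 := by lia
  rw [rG, hcast, Real.rpow_inv_natCast_pow (by positivity) (by lia)]
  field_simp

/-- `|r_G(X, e) - p| < ε` for all edges `e` of `K_n` and all graphs `G` with at most `L` vertices
and at least two edges. -/
def RootedDensitiesNear (L : ℕ) (p ε : ℝ) (X : Config n) : Prop :=
  ∀ m ≤ L, ∀ G : Finset (EdgeK m), 2 ≤ #G → ∀ e, |rG X G e - p| < ε

/-- The filter of the limit `n → ∞`, `r_G(X, ·) → p`, uniformly in the rooted graph `(X, e)` on
`[n]`. -/
noncomputable def rootedDensityFilter (L : ℕ) (p : ℝ) : Filter ((n : ℕ) × Config n × EdgeK n) :=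
  comap Sigma.fst atTop ⊓ ⨅ ε ∈ Set.Ioi (0 : ℝ), 𝓟 {x | RootedDensitiesNear L p ε x.2.1}

lemma eventually_rootedDensityFilter_iff {P : (n : ℕ) × Config n × EdgeK n → Prop} :
    (∀ᶠ x in rootedDensityFilter L p, P x) ↔ ∃ ε > 0, ∃ N, ∀ n ≥ N, ∀ X : Config n,
      RootedDensitiesNear L p ε X → ∀ e, P ⟨n, X, e⟩ := by
  have hdir : DirectedOn ((fun ε => {x : (n : ℕ) × Config n × EdgeK n |
      RootedDensitiesNear L p ε x.2.1}) ⁻¹'o (· ≥ ·)) (Set.Ioi 0) := fun ε hε δ hδ =>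
    ⟨min ε δ, Set.mem_Ioi.2 (lt_min hε hδ),
      fun _ h m hm G hG e => (h m hm G hG e).trans_le (min_le_left _ _),
      fun _ h m hm G hG e => (h m hm G hG e).trans_le (min_le_right _ _)⟩
  have hbasis := (atTop_basis.comap (Sigma.fst : (n : ℕ) × Config n × EdgeK n → ℕ)).inf
    (hasBasis_biInf_principal hdir ⟨1, Set.mem_Ioi.2 one_pos⟩)
  rw [rootedDensityFilter, hbasis.eventually_iff]
  constructor
  · rintro ⟨⟨N, ε⟩, ⟨-, hε⟩, h⟩
    exact ⟨ε, hε, N, fun n hn X hX e => h ⟨hn, hX⟩⟩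
  · rintro ⟨ε, hε, N, h⟩
    exact ⟨⟨N, ε⟩, ⟨trivial, hε⟩, fun ⟨n, X, e⟩ ⟨hn, hX⟩ => h n hn X hX e⟩

lemma tendsto_fst_rootedDensityFilter :
    Tendsto Sigma.fst (rootedDensityFilter L p) atTop :=
  tendsto_comap.mono_left inf_le_left

lemma tendsto_rG (hm : m ≤ L) {G : Finset (EdgeK m)} (hG : 2 ≤ #G) :
    Tendsto (fun x => rG x.2.1 G x.2.2) (rootedDensityFilter L p) (𝓝 p) :=
  Metric.tendsto_nhds.2 fun ε hε => eventually_rootedDensityFilter_iff.2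
    ⟨ε, hε, 0, fun _ _ _ hX e => hX m hm G hG e⟩

lemma tendsto_rootedCount_singleton (a : EdgeK m) :
    Tendsto (fun x => (rootedCount x.2.1 {a} x.2.2 : ℝ) / (x.1 : ℝ) ^ (m - 2))
      (rootedDensityFilter L p) (𝓝 2) := by
  have hlim : Tendsto (fun n : ℕ => 2 * ((n.descFactorial m : ℝ) / (n : ℝ) ^ m) /
      ((n.descFactorial 2 : ℝ) / (n : ℝ) ^ 2)) atTop (𝓝 2) := by
    have h := ((tendsto_descFactorial_div_pow m).const_mul 2).div
      (tendsto_descFactorial_div_pow 2) one_ne_zero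
    rw [mul_one, div_one] at h
    exact h
  refine (hlim.comp tendsto_fst_rootedDensityFilter).congr fun ⟨n, X, e⟩ => ?_
  have hn : (n : ℝ) ≠ 0 := by exact_mod_cast (two_pos.trans_le (two_le_of_edgeK e)).ne'
  have hC : (n.choose 2 : ℝ) ≠ 0 := by exact_mod_cast (choose_two_pos_of_edgeK e).ne'
  obtain ⟨k, rfl⟩ := Nat.exists_eq_add_of_le' (two_le_of_edgeK a)
  simp only [Function.comp_apply, rootedCount_singleton, ← choose_two_mul_card_mapEdge_eq a e,
    Nat.descFactorial_eq_factorial_mul_choose n 2, Nat.factorial_two, Nat.cast_mul, Nat.cast_ofNat,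
    pow_add, Nat.add_sub_cancel]
  field_simp

lemma tendsto_rootedCount (hm : m ≤ L) (G : Finset (EdgeK m)) :
    Tendsto (fun x => (rootedCount x.2.1 G x.2.2 : ℝ) / (x.1 : ℝ) ^ (m - 2))
      (rootedDensityFilter L p) (𝓝 (2 * (#G : ℝ) * p ^ (#G - 1))) := by
  rcases le_or_gt 2 #G with h2 | h1
  · refine (((tendsto_rG hm h2).pow _).const_mul _).congr fun ⟨n, X, e⟩ => ?_
    exact (rootedCount_div_pow_eq_rG_pow (two_pos.trans_le (two_le_of_edgeK e)) X h2 e).symm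
  · obtain rfl | hne := G.eq_empty_or_nonempty
    · simpa [rootedCount_empty] using tendsto_const_nhds
    · obtain ⟨a, rfl⟩ := card_eq_one.1 ((Nat.le_of_lt_succ h1).antisymm hne.card_pos)
      simpa using tendsto_rootedCount_singleton a

variable {Pt β}

lemma tendsto_dH (hVL : ∀ i, V i ≤ L) :
    Tendsto (fun x => dH V Pt β x.1 x.2.1 x.2.2) (rootedDensityFilter L p)
      (𝓝 (PsiF Pt β p)) := by
  simp only [dH_eq_sum_rootedCount]
  convert tendsto_finsetSum univ fun i _ =>
    (tendsto_rootedCount (p := p) (hVL i) (Pt i)).const_mul (β i) using 2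
  exact sum_congr rfl fun i _ => by ring

lemma hasDerivAt_PsiF (p : ℝ) :
    HasDerivAt (PsiF Pt β) (∑ i, 2 * β i * (#(Pt i) : ℝ) *
      ((#(Pt i) - 1 : ℕ) * p ^ (#(Pt i) - 1 - 1))) p :=
  .fun_sum fun _ _ => (hasDerivAt_pow _ _).const_mul _

lemma tendsto_edgeInfluence (hVL : ∀ i, V i ≤ L) :
    Tendsto (fun x => edgeInfluence Pt β x.2.1 x.2.2) (rootedDensityFilter L p)
      (𝓝 (deriv (PsiF Pt β) p)) := by
  rw [(hasDerivAt_PsiF p).deriv]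
  unfold edgeInfluence
  convert tendsto_finsetSum univ fun i _ => (tendsto_finsetSum (Pt i) fun a _ =>
    tendsto_rootedCount (p := p) (hVL i) ((Pt i).erase a)).const_mul (β i) using 2
  refine sum_congr rfl fun i _ => ?_
  have hconst : ∀ a ∈ Pt i, 2 * (#((Pt i).erase a) : ℝ) * p ^ (#((Pt i).erase a) - 1) =
      2 * ((#(Pt i) - 1 : ℕ) : ℝ) * p ^ (#(Pt i) - 1 - 1) := fun a ha => by
    rw [card_erase_of_mem ha]
  rw [sum_congr rfl hconst, sum_const, nsmul_eq_mul]
  ring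

end Limit

section Contraction

variable {L s : ℕ} {V : Fin s → ℕ} {Pt : ∀ i, Finset (EdgeK (V i))} {β : Fin s → ℝ} {p : ℝ}

lemma deriv_phiF (p : ℝ) : deriv (phiF Pt β) p =
    deriv Real.sigmoid (PsiF Pt β p) * deriv (PsiF Pt β) p := by
  have : phiF Pt β = Real.sigmoid ∘ PsiF Pt β := funext fun _ => exp_div_one_add_exp _
  rw [this, deriv_comp p (Real.hasDerivAt_sigmoid _).differentiableAt
    (hasDerivAt_PsiF p).differentiableAt]

lemma exists_sum_sigmoid_dH_sub_le (hVL : ∀ i, V i ≤ L) (hβ : ∀ i, 2 ≤ #(Pt i) → 0 ≤ β i)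
    (hp : deriv (phiF Pt β) p < 1) :
    ∃ c < 1, ∃ ε > 0, ∃ N, ∀ n ≥ N, ∀ X Y : Config n, ∀ e,
      RootedDensitiesNear L p ε X → RootedDensitiesNear L p ε Y →
      (∀ f, Y f = true → X f = true) → (∀ f, f ≠ e → X f = Y f) →
      ∑ f ∈ univ.erase e,
        (Real.sigmoid (dH V Pt β n X f) - Real.sigmoid (dH V Pt β n Y f)) ≤ c := by
  set d := ‖fderiv ℝ Real.sigmoid (PsiF Pt β p)‖₊ with hd
  have hdp : d * deriv (PsiF Pt β) p < 1 := by
    rwa [hd, coe_nnnorm, ← norm_deriv_eq_norm_fderiv,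
      Real.norm_of_nonneg Real.sigmoid_monotone.deriv_nonneg, ← deriv_phiF]
  obtain ⟨K, hdK, hK⟩ : ∃ K > d, K * deriv (PsiF Pt β) p < 1 :=
    (((NNReal.continuous_coe.mul continuous_const).tendsto d).eventually_lt_const hdp).exists_gt
  obtain ⟨c, hKc, hc⟩ := exists_between hK
  obtain ⟨U, hU, hlip⟩ :=
    analyticAt_sigmoid.hasStrictFDerivAt.exists_lipschitzOnWith_of_nnnorm_lt K hdK
  obtain ⟨ε, hε, N, h⟩ := eventually_rootedDensityFilter_iff.1 <|
    ((tendsto_dH (p := p) hVL).eventually_mem hU).and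
      (((tendsto_edgeInfluence (p := p) hVL).const_mul (K : ℝ)).eventually_lt_const hKc)
  refine ⟨c, hc, ε, hε, N, fun n hn X Y e hX hY hle hoff => ?_⟩
  calc ∑ f ∈ univ.erase e, (Real.sigmoid (dH V Pt β n X f) - Real.sigmoid (dH V Pt β n Y f))
    _ ≤ ∑ f ∈ univ.erase e, K * (dH V Pt β n X f - dH V Pt β n Y f) :=
      sum_le_sum fun f _ => by
        have := hlip.dist_le_mul _ (h n hn X hX f).1 _ (h n hn Y hY f).1
        rw [Real.dist_eq, Real.dist_eq, abs_of_nonneg (sub_nonneg.2 (dH_mono hβ hle f))] at this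
        exact (le_abs_self _).trans this
    _ = K * ∑ f ∈ univ.erase e, (dH V Pt β n X f - dH V Pt β n Y f) := (mul_sum _ _ _).symm
    _ ≤ K * edgeInfluence Pt β X e :=
      mul_le_mul_of_nonneg_left (sum_dH_sub_le_edgeInfluence hβ hoff) K.2
    _ ≤ c := (h n hn X hX e).2.le

end Contraction

theorem path_coupling_contraction_general {L s : ℕ} {V : Fin s → ℕ}
    (Pt : ∀ i, Finset (EdgeK (V i))) (β : Fin s → ℝ) (hVL : ∀ i, V i ≤ L)
    (hβ : ∀ i, 2 ≤ #(Pt i) → 0 ≤ β i) {p : ℝ} (hp : deriv (phiF Pt β) p < 1) :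
    ∃ ε δ : ℝ, 0 < ε ∧ 0 < δ ∧ ∃ N : ℕ, ∀ n ≥ N, ∀ (Xp Xm : Config n) (e : EdgeK n),
      (∀ f, Xm f = true → Xp f = true) →
      (∀ f : EdgeK n, f ≠ e → Xp f = Xm f) →
      (∀ m : ℕ, m ≤ L → ∀ G : Finset (EdgeK m), 2 ≤ G.card → ∀ e' : EdgeK n,
        |rG Xp G e' - p| < ε ∧ |rG Xm G e' - p| < ε) →
      ∃ ν : Config n × Config n → ℝ,
        (∀ z, 0 ≤ ν z) ∧ (∑ z, ν z = 1) ∧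
        (∀ Y, ∑ Z, ν (Y, Z) = glauber V Pt β n Xp Y) ∧
        (∀ Z, ∑ Y, ν (Y, Z) = glauber V Pt β n Xm Z) ∧
        ∑ z : Config n × Config n, ν z * (hamDist z.1 z.2 : ℝ) ≤ 1 - δ / (n : ℝ) ^ 2 := by
  obtain ⟨c, hc, ε, hε, N, h⟩ := exists_sum_sigmoid_dH_sub_le hVL hβ hp
  refine ⟨ε, 1 - c, hε, sub_pos.2 hc, N, fun n hn Xp Xm e hle hoff hnear => ?_⟩
  obtain ⟨ν, hν, hdist⟩ := exists_isCoupling_glauber_sum_hamDist_le Pt β hoff (dH_mono hβ hle)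
  have hsum := h n hn Xp Xm e (fun m hm G hG f => (hnear m hm G hG f).1)
    (fun m hm G hG f => (hnear m hm G hG f).2) hle hoff
  have hchoose : (0 : ℝ) < n.choose 2 := by exact_mod_cast choose_two_pos_of_edgeK e
  refine ⟨ν, hν.nonneg, hν.sum_eq.trans (sum_glauber Pt β (two_le_of_edgeK e) Xp), hν.sum_snd,
    hν.sum_fst, hdist.trans (sub_le_sub_left ?_ 1)⟩
  exact div_le_div₀ (by linarith) (by linarith) hchoose (by exact_mod_cast Nat.choose_le_pow n 2)

/-- **Path coupling contraction (Lemma 7).** Let `p* ∈ [0,1]` solve `φ(p)=p` with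
`0 < φ'(p*) < 1`. There are `ε, δ > 0` such that for large `n`, for any two configurations
`X⁺ ≥ X⁻` differing at exactly one edge `e` whose rooted densities `r_G(·,e')` are all
`ε`-close to `p*`, one step of the Glauber dynamics from the two states can be coupled so
that the expected Hamming distance is at most `1 - δ/n²`. -/
theorem path_coupling_contraction
    {L s : ℕ} (hL : 2 ≤ L) (hs : 0 < s)
    (V : Fin s → ℕ) (Pt : ∀ i, Finset (EdgeK (V i))) (β : Fin s → ℝ)
    (hV2 : ∀ i, 2 ≤ V i) (hVL : ∀ i, V i ≤ L)
    (hG1V : V ⟨0, hs⟩ = 2) (hG1E : (Pt ⟨0, hs⟩).card = 1)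
    (hβ : ∀ i : Fin s, 0 < (i : ℕ) → 0 < β i)
    (pstar : ℝ) (hmem : pstar ∈ Set.Icc (0:ℝ) 1) (hfix : phiF Pt β pstar = pstar)
    (hd0 : 0 < deriv (phiF Pt β) pstar) (hd1 : deriv (phiF Pt β) pstar < 1) :
    ∃ ε δ : ℝ, 0 < ε ∧ 0 < δ ∧ ∃ N : ℕ, ∀ n ≥ N,
      ∀ (Xp Xm : Config n) (e : EdgeK n),
        (∀ f, Xm f = true → Xp f = true) →
        Xp e ≠ Xm e →
        (∀ f : EdgeK n, f ≠ e → Xp f = Xm f) →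
        (∀ m : ℕ, m ≤ L → ∀ G : Finset (EdgeK m), 2 ≤ G.card → ∀ e' : EdgeK n,
          |rG Xp G e' - pstar| < ε ∧ |rG Xm G e' - pstar| < ε) →
        ∃ ν : Config n × Config n → ℝ,
          (∀ z, 0 ≤ ν z) ∧ (∑ z, ν z = 1) ∧
          (∀ Y, ∑ Z, ν (Y, Z) = glauber V Pt β n Xp Y) ∧
          (∀ Z, ∑ Y, ν (Y, Z) = glauber V Pt β n Xm Z) ∧
          ∑ z : Config n × Config n, ν z * (hamDist z.1 z.2 : ℝ) ≤ 1 - δ / (n : ℝ) ^ 2 := by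
  have hβ' : ∀ i, 2 ≤ #(Pt i) → 0 ≤ β i := fun i hi =>
    (hβ i (Nat.pos_of_ne_zero fun h0 => by
      obtain rfl : i = ⟨0, hs⟩ := Fin.ext h0
      lia)).le
  obtain ⟨ε, δ, hε, hδ, N, h⟩ := path_coupling_contraction_general Pt β hVL hβ' hd1
  exact ⟨ε, δ, hε, hδ, N, fun n hn Xp Xm e hle _ => h n hn Xp Xm e hle⟩
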